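/- Let W be a closure space in which the empty set is closed. If W is LS(W)⁺-homogeneous and κ(W) = ℵ₀ (W has finite character), then W has exchange over the empty set. -/

import Mathlib

open Cardinal Set

universe u v

variable {X : Type u}

/-- `cl` is a closure operator: monotonicity and transitivity. -/
def IsClosure (cl : Set X → Set X) : Prop :=
  (∀ A : Set X, A ⊆ cl A) ∧ ∀ A B : Set X, A ⊆ cl B → cl A ⊆ cl B

/-- `f` is an automorphism of the closure space `(X, cl)`. -/
def IsAuto (cl : Set X → Set X) (f : X → X) : Prop :=
  Function.Bijective f ∧ ∀ A : Set X, f '' cl A = cl (f '' A)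

/-- The closure space `(X, cl)` is `μ`-homogeneous. -/
def IsHomog (cl : Set X → Set X) (μ : Cardinal.{u}) : Prop :=
  ∀ A : Set X, #A < μ → ∀ a b : X, a ∉ cl A → b ∉ cl A →
    ∃ f : X → X, IsAuto cl f ∧ (∀ x ∈ A, f x = x) ∧ f a = b

/-- The closure space `(X, cl)` has exchange over `A`. -/
def ExchOver (cl : Set X → Set X) (A : Set X) : Prop :=
  ∀ a b : X, a ∈ cl (A ∪ {b}) → a ∉ cl A → b ∈ cl (A ∪ {a})

/-- The localization `W_A`: the closure space on `X \ A` with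
`cl^{W_A}(B) = cl(A ∪ B) ∩ (X \ A)`. -/
def locCl (cl : Set X → Set X) (A : Set X) :
    Set {x : X // x ∉ A} → Set {x : X // x ∉ A} :=
  fun B => {x | (x : X) ∈ cl (A ∪ (Subtype.val '' B))}

/-- `κ(W)`: the least infinite cardinal `κ` such that whenever `a ∈ cl A` there is
`A₀ ⊆ A` with `|A₀| < κ` and `a ∈ cl A₀`. -/
noncomputable def kappaCard (cl : Set X → Set X) : Cardinal.{u} :=
  sInf {κ : Cardinal.{u} | ℵ₀ ≤ κ ∧
    ∀ (A : Set X) (a : X), a ∈ cl A → ∃ A₀, A₀ ⊆ A ∧ #A₀ < κ ∧ a ∈ cl A₀}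

/-- `LS(W)`: the least infinite cardinal `μ` such that `|cl A| ≤ |A| + μ` for all `A`. -/
noncomputable def LSCard (cl : Set X → Set X) : Cardinal.{u} :=
  sInf {μ : Cardinal.{u} | ℵ₀ ≤ μ ∧ ∀ A : Set X, #(cl A) ≤ #A + μ}

theorem aux_auto {cl : Set X → Set X} {f : X → X} (hf : IsAuto cl f) (x y : X) :
    f x ∈ cl {f y} ↔ x ∈ cl {y} := by
  have h := hf.2 {y}
  rw [Set.image_singleton] at h
  rw [← h]
  exact hf.1.1.mem_set_image

theorem aux_LS (cl : Set X → Set X) :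
    ℵ₀ ≤ LSCard cl ∧ ∀ A : Set X, #(cl A) ≤ #A + LSCard cl := by
  have hne : {μ : Cardinal.{u} | ℵ₀ ≤ μ ∧ ∀ A : Set X, #(cl A) ≤ #A + μ}.Nonempty :=
    ⟨max ℵ₀ #X, le_max_left _ _, fun A =>
      ((mk_set_le _).trans (le_max_right _ _)).trans (self_le_add_left _ _)⟩
  exact csInf_mem hne

theorem aux_kappa (cl : Set X → Set X) (hκ : kappaCard cl = ℵ₀) (A : Set X) (a : X)
    (ha : a ∈ cl A) : ∃ A₀ : Set X, A₀ ⊆ A ∧ A₀.Finite ∧ a ∈ cl A₀ := by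
  have hne : {κ : Cardinal.{u} | ℵ₀ ≤ κ ∧
    ∀ (A : Set X) (a : X), a ∈ cl A → ∃ A₀, A₀ ⊆ A ∧ #A₀ < κ ∧ a ∈ cl A₀}.Nonempty :=
    ⟨Order.succ (max ℵ₀ #X), (le_max_left _ _).trans (Order.le_succ _), fun A a h =>
      ⟨A, subset_rfl, Order.lt_succ_of_le ((mk_set_le _).trans (le_max_right _ _)), h⟩⟩
  have h := csInf_mem hne
  change kappaCard cl ∈ _ at h
  rw [hκ] at h
  obtain ⟨A₀, h1, h2, h3⟩ := h.2 A a ha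
  exact ⟨A₀, h1, lt_aleph0_iff_set_finite.1 h2, h3⟩

/-- A closure space with `∅` closed which is `LS(W)⁺`-homogeneous and has finite
character (`κ(W) = ℵ₀`) has exchange over `∅`. -/
theorem stmt9 (cl : Set X → Set X) (hcl : IsClosure cl) (hempty : cl ∅ = ∅)
    (hhom : IsHomog cl (Order.succ (LSCard cl))) (hκ : kappaCard cl = ℵ₀) :
    ExchOver cl ∅ := by
  have tr : ∀ x y z : X, x ∈ cl {y} → y ∈ cl {z} → x ∈ cl {z} := fun x y z h1 h2 =>
    hcl.2 {y} {z} (by simpa using h2) h1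
  have rf : ∀ x : X, x ∈ cl {x} := fun x => hcl.1 {x} rfl
  obtain ⟨hLS0, hLS⟩ := aux_LS cl
  intro a b hab _
  simp only [Set.empty_union] at hab ⊢
  by_contra hba
  have up : ∀ x : X, ∃ y, x ∈ cl {y} ∧ y ∉ cl {x} := by
    intro x
    obtain ⟨f, hf, -, rfl⟩ := hhom ∅ (by simp) a x (by simp [hempty]) (by simp [hempty])
    exact ⟨f b, (aux_auto hf _ _).2 hab, fun h => hba ((aux_auto hf _ _).1 h)⟩
  have tot : ∀ x y : X, y ∉ cl {x} → x ∈ cl {y} := by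
    intro x y hy
    obtain ⟨x', h1, h2⟩ := up x
    obtain ⟨f, hf, hfx, rfl⟩ := hhom {x} (by
      rw [mk_singleton]
      exact Order.lt_succ_of_le (one_le_aleph0.trans hLS0)) x' y h2 hy
    have := (aux_auto hf _ _).2 h1
    rwa [hfx x rfl] at this
  have mx : ∀ A : Set X, A.Finite → A = ∅ ∨ ∃ m ∈ A, A ⊆ cl {m} := by
    intro A hA
    induction A, hA using Set.Finite.induction_on with
    | empty => exact Or.inl rfl
    | @insert c s _ _ ih =>
      right
      rcases ih with rfl | ⟨m, hm, hs⟩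
      · exact ⟨c, by simp, by simpa using rf c⟩
      · by_cases h : c ∈ cl {m}
        · exact ⟨m, Or.inr hm, Set.insert_subset h hs⟩
        · exact ⟨c, Or.inl rfl, Set.insert_subset (rf c)
            fun z hz => tr z m c (hs hz) (tot m c h)⟩
  obtain ⟨b', hb1, hb2⟩ := up b
  let U : Set X := {x | b ∉ cl {x}}
  have hU : #U < Order.succ (LSCard cl) := by
    apply Order.lt_succ_of_le
    have h1 : U ⊆ cl {b} := fun x hx => tot x b hx
    refine (mk_le_mk_of_subset h1).trans ((hLS {b}).trans ?_)
    rw [mk_singleton]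
    exact (add_eq_right hLS0 (one_le_aleph0.trans hLS0)).le
  have hout : ∀ y, b ∈ cl {y} → y ∉ cl U := by
    intro y hy hyU
    obtain ⟨A₀, h1, h2, h3⟩ := aux_kappa cl hκ U y hyU
    rcases mx A₀ h2 with rfl | ⟨m, hm, hs⟩
    · simp [hempty] at h3
    · exact h1 hm (tr b y m hy (hcl.2 _ _ hs h3))
  obtain ⟨f, hf, hfU, hfb⟩ := hhom U hU b b' (hout b (rf b)) (hout b' hb1)
  obtain ⟨c, hc⟩ := hf.1.2 b
  have hcU : c ∈ U := by
    intro h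
    apply hb2
    have h2 := (aux_auto hf b c).2 h
    rwa [hfb, hc] at h2
  have : c = b := (hfU c hcU).symm.trans hc
  subst this
  exact hcU (rf c)
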